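/- Let G̃ : [0, ∞) → Matrix (Fin 2) (Fin 2) ℝ be given by G̃(t) = [[2 arctan t, √(t+1) − √t], [−1/(1+t²), 1 + e^{−t}]], and f(t) = sin t. Then the system A(t) = f'(t) G̃(t) = cos(t) G̃(t) is bistable: there exists C > 0 such that every evolution operator X for A in ℝ² satisfies ‖X(t, s)‖ ≤ C for all s, t ≥ 0. -/

import Mathlib

open MeasureTheory Set

/-- The matrix `G̃(t)` of the example. -/
noncomputable def exGmat (t : ℝ) : Matrix (Fin 2) (Fin 2) ℝ :=
  !![2 * Real.arctan t, Real.sqrt (t + 1) - Real.sqrt t;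
     -(1 / (1 + t ^ 2)), 1 + Real.exp (-t)]

/-!
Let `A = f' G` with `f` bounded and `G'` integrable on the half-line. The substitution
`y = exp (-f G) x` turns `x' = A x` into `y' = -(D exp (-f G) (f G')) x`: the direction `f' G`
commutes with `f G`, so its contribution `exp (-f G) (f' G)` to the derivative of the exponential
cancels `A` exactly, however fast `f` oscillates. Since `f G` is bounded, this gives
`‖y'‖ ≤ c ‖G'‖ ‖y‖`, and Grönwall's inequality in both directions of time bounds `y`, hence `x`.
In the example `f = sin`, and each entry of `G` is monotone and convergent, so `G'` is integrable.
-/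

open Filter Topology NormedSpace

section Gronwall

variable {E : Type*} [NormedAddCommGroup E] [NormedSpace ℝ E]

theorem norm_le_exp_sub_mul_of_norm_deriv_right_le {y y' : ℝ → E} {ρ r : ℝ → ℝ} {a b : ℝ}
    (hab : a ≤ b) (hy : ContinuousOn y (Icc a b))
    (hy' : ∀ t ∈ Ico a b, HasDerivWithinAt y (y' t) (Ici t) t)
    (hρ : ContinuousOn ρ (Icc a b)) (hρ' : ∀ t ∈ Ico a b, HasDerivWithinAt ρ (r t) (Ici t) t)
    (bound : ∀ t ∈ Ico a b, ‖y' t‖ ≤ r t * ‖y t‖) :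
    ‖y b‖ ≤ Real.exp (ρ b - ρ a) * ‖y a‖ := by
  let B (ε t : ℝ) : ℝ := Real.exp (ρ t - ρ a + ε * (t - a)) * (‖y a‖ + ε)
  have norm_le_B : ∀ ε > 0, ‖y b‖ ≤ B ε b := fun ε hε ↦ by
    have B_pos (t : ℝ) : 0 < B ε t := by positivity
    have hB' (t : ℝ) (ht : t ∈ Ico a b) :
        HasDerivWithinAt (B ε) ((r t + ε) * B ε t) (Ici t) t := by
      refine (((((hρ' t ht).sub_const (ρ a)).add
        (((hasDerivWithinAt_id t _).sub_const a).const_mul ε)).exp).mul_const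
          (‖y a‖ + ε)).congr_deriv ?_
      simp only [B, Pi.add_apply, id_eq]
      ring
    refine image_norm_le_of_norm_deriv_right_lt_deriv_boundary' hy hy' ?_ ?_ hB' ?_
      (right_mem_Icc.2 hab)
    · simpa [B] using hε.le
    · fun_prop
    · intro t ht h
      calc ‖y' t‖ ≤ r t * B ε t := h ▸ bound t ht
        _ < (r t + ε) * B ε t := by nlinarith [B_pos t]
  have hB : Tendsto (B · b) (𝓝[>] 0) (𝓝 (B 0 b)) :=
    (by fun_prop : Continuous (B · b)).continuousWithinAt
  simpa [B] using ge_of_tendsto hB (eventually_mem_nhdsWithin.mono norm_le_B)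

theorem norm_le_exp_sub_mul_of_norm_deriv_le {y y' : ℝ → E} {ρ r : ℝ → ℝ} {a b : ℝ}
    (hab : a ≤ b) (hy : ContinuousOn y (Icc a b)) (hy' : ∀ t ∈ Ioo a b, HasDerivAt y (y' t) t)
    (hρ : ContinuousOn ρ (Icc a b)) (hρ' : ∀ t ∈ Ioo a b, HasDerivAt ρ (r t) t)
    (bound : ∀ t ∈ Ioo a b, ‖y' t‖ ≤ r t * ‖y t‖) :
    ‖y b‖ ≤ Real.exp (ρ b - ρ a) * ‖y a‖ := by
  rcases hab.eq_or_lt with rfl | hab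
  · simp
  have bound_of_mem_Ioo : ∀ c ∈ Ioo a b, ‖y b‖ ≤ Real.exp (ρ b - ρ c) * ‖y c‖ := fun c hc ↦ by
    have Icc_sub : Icc c b ⊆ Icc a b := Icc_subset_Icc_left hc.1.le
    have Ico_sub : Ico c b ⊆ Ioo a b := Ico_subset_Ioo_left hc.1
    exact norm_le_exp_sub_mul_of_norm_deriv_right_le hc.2.le (hy.mono Icc_sub)
      (fun t ht ↦ (hy' t (Ico_sub ht)).hasDerivWithinAt) (hρ.mono Icc_sub)
      (fun t ht ↦ (hρ' t (Ico_sub ht)).hasDerivWithinAt) (fun t ht ↦ bound t (Ico_sub ht))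
  have := left_nhdsWithin_Ioo_neBot hab
  have hcont : ContinuousOn (fun c ↦ Real.exp (ρ b - ρ c) * ‖y c‖) (Icc a b) := by fun_prop
  exact ge_of_tendsto ((hcont a (left_mem_Icc.2 hab.le)).mono Ioo_subset_Icc_self)
    (eventually_mem_nhdsWithin.mono bound_of_mem_Ioo)

theorem norm_right_le_exp_integral_mul_of_norm_deriv_le {y y' : ℝ → E} {r : ℝ → ℝ} {a b : ℝ}
    (hab : a ≤ b) (hy : ContinuousOn y (Icc a b)) (hy' : ∀ t ∈ Ioo a b, HasDerivAt y (y' t) t)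
    (hr : IntervalIntegrable r volume a b) (hr_cont : ContinuousOn r (Ioo a b))
    (bound : ∀ t ∈ Ioo a b, ‖y' t‖ ≤ r t * ‖y t‖) :
    ‖y b‖ ≤ Real.exp (∫ t in a..b, r t) * ‖y a‖ := by
  let ρ (t : ℝ) : ℝ := ∫ τ in a..t, r τ
  have hρ : ContinuousOn ρ (Icc a b) := by
    simpa only [uIcc_of_le hab] using
      intervalIntegral.continuousOn_primitive_interval' hr left_mem_uIcc
  have hρ' (t : ℝ) (ht : t ∈ Ioo a b) : HasDerivAt ρ (r t) t :=
    intervalIntegral.integral_hasDerivAt_right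
      (hr.mono_set (uIcc_subset_uIcc_left (mem_uIcc_of_le ht.1.le ht.2.le)))
      (hr_cont.stronglyMeasurableAtFilter isOpen_Ioo t ht)
      (hr_cont.continuousAt (Ioo_mem_nhds ht.1 ht.2))
  simpa [ρ] using norm_le_exp_sub_mul_of_norm_deriv_le hab hy hy' hρ hρ' bound

theorem norm_left_le_exp_integral_mul_of_norm_deriv_le {y y' : ℝ → E} {r : ℝ → ℝ} {a b : ℝ}
    (hab : a ≤ b) (hy : ContinuousOn y (Icc a b)) (hy' : ∀ t ∈ Ioo a b, HasDerivAt y (y' t) t)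
    (hr : IntervalIntegrable r volume a b) (hr_cont : ContinuousOn r (Ioo a b))
    (bound : ∀ t ∈ Ioo a b, ‖y' t‖ ≤ r t * ‖y t‖) :
    ‖y a‖ ≤ Real.exp (∫ t in a..b, r t) * ‖y b‖ := by
  have maps_Icc : MapsTo Neg.neg (Icc (-b) (-a)) (Icc a b) := fun t ht ↦
    ⟨le_neg.1 ht.2, neg_le.1 ht.1⟩
  have maps_Ioo : MapsTo Neg.neg (Ioo (-b) (-a)) (Ioo a b) := fun t ht ↦
    ⟨lt_neg.1 ht.2, neg_lt.1 ht.1⟩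
  have reversed := norm_right_le_exp_integral_mul_of_norm_deriv_le (y := fun t ↦ y (-t))
    (r := fun t ↦ r (-t)) (neg_le_neg hab)
    (hy.comp continuousOn_neg maps_Icc)
    (fun t ht ↦ HasDerivAt.scomp t (hy' (-t) (maps_Ioo ht)) (hasDerivAt_neg t))
    ((IntervalIntegrable.iff_comp_neg (by simp)).1 hr.symm) (hr_cont.comp continuousOn_neg maps_Ioo)
    (fun t ht ↦ by simpa using bound (-t) (maps_Ioo ht))
  simpa [intervalIntegral.integral_comp_neg] using reversed

theorem norm_le_exp_integral_Ioi_mul_of_norm_deriv_le {y y' : ℝ → E} {r : ℝ → ℝ} {a s t : ℝ}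
    (hy : ContinuousOn y (Ici a)) (hy' : ∀ τ ∈ Ioi a, HasDerivAt y (y' τ) τ)
    (hr : IntegrableOn r (Ioi a)) (hr_cont : ContinuousOn r (Ioi a))
    (hr_nonneg : ∀ τ ∈ Ioi a, 0 ≤ r τ) (bound : ∀ τ ∈ Ioi a, ‖y' τ‖ ≤ r τ * ‖y τ‖)
    (hs : a ≤ s) (ht : a ≤ t) :
    ‖y t‖ ≤ Real.exp (∫ τ in Ioi a, r τ) * ‖y s‖ := by
  have Ioc_sub {c d : ℝ} (hc : a ≤ c) : Ioc c d ⊆ Ioi a := fun τ hτ ↦ hc.trans_lt hτ.1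
  have Ioo_sub {c d : ℝ} (hc : a ≤ c) : Ioo c d ⊆ Ioi a := fun τ hτ ↦ hc.trans_lt hτ.1
  have Icc_sub {c d : ℝ} (hc : a ≤ c) : Icc c d ⊆ Ici a := fun τ hτ ↦ hc.trans hτ.1
  have intervalIntegrable {c d : ℝ} (hc : a ≤ c) (hcd : c ≤ d) :
      IntervalIntegrable r volume c d :=
    (intervalIntegrable_iff_integrableOn_Ioc_of_le hcd).2 (hr.mono_set (Ioc_sub hc))
  have integral_le {c d : ℝ} (hc : a ≤ c) (hcd : c ≤ d) :
      ∫ τ in c..d, r τ ≤ ∫ τ in Ioi a, r τ := by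
    rw [intervalIntegral.integral_of_le hcd]
    exact setIntegral_mono_set hr (ae_restrict_of_forall_mem measurableSet_Ioi hr_nonneg)
      (Ioc_sub hc).eventuallyLE
  rcases le_total s t with h | h
  · refine (norm_right_le_exp_integral_mul_of_norm_deriv_le h (hy.mono (Icc_sub hs))
      (fun τ hτ ↦ hy' τ (Ioo_sub hs hτ)) (intervalIntegrable hs h) (hr_cont.mono (Ioo_sub hs))
      fun τ hτ ↦ bound τ (Ioo_sub hs hτ)).trans ?_
    gcongr
    exact integral_le hs h
  · refine (norm_left_le_exp_integral_mul_of_norm_deriv_le h (hy.mono (Icc_sub ht))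
      (fun τ hτ ↦ hy' τ (Ioo_sub ht hτ)) (intervalIntegrable ht h) (hr_cont.mono (Ioo_sub ht))
      fun τ hτ ↦ bound τ (Ioo_sub ht hτ)).trans ?_
    gcongr
    exact integral_le ht h

end Gronwall

section Exponential

variable {𝔸 : Type*} [NormedRing 𝔸]

-- A normed ring may have `‖1‖ > 1`, so powers and exponentials are estimated through their action
-- on a second factor.
theorem norm_pow_mul_le (x z : 𝔸) (n : ℕ) : ‖x ^ n * z‖ ≤ ‖x‖ ^ n * ‖z‖ := by
  induction n with
  | zero => simp
  | succ n ih =>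
    calc ‖x ^ (n + 1) * z‖ = ‖x * (x ^ n * z)‖ := by rw [pow_succ', mul_assoc]
      _ ≤ ‖x‖ * (‖x‖ ^ n * ‖z‖) := (norm_mul_le _ _).trans (by gcongr)
      _ = ‖x‖ ^ (n + 1) * ‖z‖ := by ring

theorem norm_pow_sub_pow_le {x y : 𝔸} {M : ℝ} (hx : ‖x‖ ≤ M) (hy : ‖y‖ ≤ M) (n : ℕ) :
    ‖x ^ n - y ^ n‖ ≤ n * M ^ (n - 1) * ‖x - y‖ := by
  induction n with
  | zero => simp
  | succ n ih =>
    have hM : 0 ≤ M := (norm_nonneg x).trans hx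
    have pow_pred_mul : n * M ^ (n - 1) * M = n * M ^ n := by
      cases n <;> simp [pow_succ, mul_assoc]
    calc ‖x ^ (n + 1) - y ^ (n + 1)‖ = ‖x ^ n * (x - y) + (x ^ n - y ^ n) * y‖ := by
          congr 1; noncomm_ring
      _ ≤ M ^ n * ‖x - y‖ + n * M ^ (n - 1) * ‖x - y‖ * M := by
          refine (norm_add_le _ _).trans (add_le_add ?_ ?_)
          · exact (norm_pow_mul_le _ _ _).trans (by gcongr)
          · exact (norm_mul_le _ _).trans (by gcongr)
      _ = M ^ n * ‖x - y‖ + n * M ^ (n - 1) * M * ‖x - y‖ := by ring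
      _ = (n + 1 : ℕ) * M ^ (n + 1 - 1) * ‖x - y‖ := by
          rw [pow_pred_mul]; push_cast [Nat.add_sub_cancel]; ring

variable [NormedAlgebra ℝ 𝔸] [CompleteSpace 𝔸]

theorem norm_exp_mul_le (x z : 𝔸) : ‖exp x * z‖ ≤ Real.exp ‖x‖ * ‖z‖ := by
  have hreal := (exp_series_hasSum_exp' (𝕂 := ℝ) ‖x‖).mul_right ‖z‖
  rw [← Real.exp_eq_exp_ℝ] at hreal
  refine ((exp_series_hasSum_exp' (𝕂 := ℝ) x).mul_right z).norm_le_of_bounded hreal fun n ↦ ?_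
  rw [smul_mul_assoc, norm_smul, Real.norm_of_nonneg (by positivity), smul_eq_mul, mul_assoc]
  gcongr
  exact norm_pow_mul_le x z n

theorem hasSum_inv_factorial_mul_nat_mul_pow_pred (M : ℝ) :
    HasSum (fun n : ℕ ↦ (n.factorial : ℝ)⁻¹ * (n * M ^ (n - 1))) (Real.exp M) := by
  refine (hasSum_nat_add_iff' 1).1 ?_
  have hexp := exp_series_hasSum_exp' (𝕂 := ℝ) M
  rw [← Real.exp_eq_exp_ℝ] at hexp
  simp only [Finset.sum_range_one, Nat.cast_zero, zero_mul, mul_zero, sub_zero]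
  convert! hexp using 2 with n
  rw [Nat.factorial_succ, Nat.add_sub_cancel, smul_eq_mul]
  push_cast
  field_simp

theorem norm_exp_sub_exp_le {x y : 𝔸} {M : ℝ} (hx : ‖x‖ ≤ M) (hy : ‖y‖ ≤ M) :
    ‖exp x - exp y‖ ≤ Real.exp M * ‖x - y‖ := by
  have hdiff := (exp_series_hasSum_exp' (𝕂 := ℝ) x).sub (exp_series_hasSum_exp' (𝕂 := ℝ) y)
  refine hdiff.norm_le_of_bounded
    ((hasSum_inv_factorial_mul_nat_mul_pow_pred M).mul_right ‖x - y‖) fun n ↦ ?_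
  rw [← smul_sub, norm_smul, Real.norm_of_nonneg (by positivity), mul_assoc]
  gcongr
  exact norm_pow_sub_pow_le hx hy n

theorem differentiable_exp_real : Differentiable ℝ (exp : 𝔸 → 𝔸) := fun x ↦
  (exp_analytic x).differentiableAt

theorem norm_fderiv_exp_le (x : 𝔸) : ‖fderiv ℝ exp x‖ ≤ Real.exp ‖x‖ := by
  refine ge_of_tendsto (Real.continuous_exp.continuousWithinAt (s := Ioi ‖x‖))
    (eventually_mem_nhdsWithin.mono fun M (hM : ‖x‖ < M) ↦ ?_)
  refine norm_fderiv_le_of_lip' ℝ (Real.exp_pos M).le ?_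
  filter_upwards [continuous_norm.continuousAt.eventually_lt continuousAt_const hM] with z hz
  exact norm_exp_sub_exp_le hz.le hM.le

theorem norm_le_exp_norm_mul_norm_exp_neg_mul (x z : 𝔸) :
    ‖z‖ ≤ Real.exp ‖x‖ * ‖exp (-x) * z‖ := by
  let +nondep : NormedAlgebra ℚ 𝔸 := .restrictScalars ℚ ℝ 𝔸
  have exp_mul_exp_neg : exp x * exp (-x) = 1 := (invertibleExp x).mul_invOf_self
  simpa [← mul_assoc, exp_mul_exp_neg] using norm_exp_mul_le x (exp (-x) * z)

theorem fderiv_exp_apply_of_commute {x y : 𝔸} (h : Commute x y) :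
    fderiv ℝ exp x y = exp x * y := by
  let +nondep : NormedAlgebra ℚ 𝔸 := .restrictScalars ℚ ℝ 𝔸
  have along_line : HasDerivAt (fun s : ℝ ↦ exp (x + s • y)) (fderiv ℝ exp x y) 0 := by
    have line : HasDerivAt (fun s : ℝ ↦ x + s • y) y 0 := by
      simpa using! ((hasDerivAt_id (0 : ℝ)).smul_const y).const_add x
    refine HasFDerivAt.comp_hasDerivAt (f := fun s : ℝ ↦ x + s • y) 0 ?_ line
    simpa using (differentiable_exp_real x).hasFDerivAt
  have product : HasDerivAt (fun s : ℝ ↦ exp (x + s • y)) (exp x * y) 0 := by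
    simp_rw [fun s : ℝ ↦ exp_add_of_commute (h.smul_right s)]
    simpa using (hasDerivAt_exp_smul_const y (0 : ℝ)).const_mul (exp x)
  exact along_line.unique product

end Exponential

theorem norm_le_add_integral_Ioi_norm_deriv {E : Type*} [NormedAddCommGroup E] [NormedSpace ℝ E]
    [CompleteSpace E] {G G' : ℝ → E} {a t : ℝ} (hG : ContinuousOn G (Ici a))
    (hG' : ∀ τ ∈ Ioi a, HasDerivAt G (G' τ) τ) (hint : IntegrableOn G' (Ioi a)) (ht : a ≤ t) :
    ‖G t‖ ≤ ‖G a‖ + ∫ τ in Ioi a, ‖G' τ‖ := by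
  have ftc : ∫ τ in a..t, G' τ = G t - G a :=
    intervalIntegral.integral_eq_sub_of_hasDerivAt_of_le ht (hG.mono Icc_subset_Ici_self)
      (fun τ hτ ↦ hG' τ hτ.1)
      ((intervalIntegrable_iff_integrableOn_Ioc_of_le ht).2 (hint.mono_set Ioc_subset_Ioi_self))
  calc ‖G t‖ = ‖G a + ∫ τ in Ioc a t, G' τ‖ := by
        rw [← intervalIntegral.integral_of_le ht, ftc, add_sub_cancel]
    _ ≤ ‖G a‖ + ∫ τ in Ioc a t, ‖G' τ‖ :=
        (norm_add_le _ _).trans (by gcongr; exact norm_integral_le_integral_norm _)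
    _ ≤ ‖G a‖ + ∫ τ in Ioi a, ‖G' τ‖ := by
        gcongr
        · exact .of_forall fun τ ↦ norm_nonneg _
        · exact hint.norm
        · exact Ioc_subset_Ioi_self

section Bistability

variable {𝔸 : Type*} [NormedRing 𝔸] [NormedAlgebra ℝ 𝔸] [CompleteSpace 𝔸]

theorem hasDerivAt_exp_neg_smul {f : ℝ → ℝ} {f' : ℝ} {G : ℝ → 𝔸} {G' : 𝔸} {t : ℝ}
    (hf : HasDerivAt f f' t) (hG : HasDerivAt G G' t) :
    HasDerivAt (fun τ ↦ exp (-(f τ • G τ)))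
      (-(exp (-(f t • G t)) * (f' • G t) + fderiv ℝ exp (-(f t • G t)) (f t • G'))) t := by
  have hcomm : Commute (-(f t • G t)) (f' • G t) :=
    (((Commute.refl (G t)).smul_left (f t)).smul_right f').neg_left
  refine (((differentiable_exp_real _).hasFDerivAt.comp_hasDerivAt t
    (hf.smul hG).neg)).congr_deriv ?_
  change fderiv ℝ exp (-(f t • G t)) (-(f t • G' + f' • G t)) = _
  rw [map_neg, map_add, fderiv_exp_apply_of_commute hcomm, add_comm]

theorem hasDerivAt_exp_neg_smul_mul {f : ℝ → ℝ} {f' : ℝ} {G x : ℝ → 𝔸} {G' : 𝔸} {t : ℝ}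
    (hf : HasDerivAt f f' t) (hG : HasDerivAt G G' t)
    (hx : HasDerivAt x (f' • G t * x t) t) :
    HasDerivAt (fun τ ↦ exp (-(f τ • G τ)) * x τ)
      (-(fderiv ℝ exp (-(f t • G t)) (f t • G') * x t)) t := by
  refine ((hasDerivAt_exp_neg_smul hf hG).mul hx).congr_deriv ?_
  noncomm_ring

theorem norm_fderiv_exp_neg_smul_mul_le (a : ℝ) (A D z : 𝔸) :
    ‖fderiv ℝ exp (-(a • A)) (a • D) * z‖ ≤
      Real.exp (2 * ‖a • A‖) * |a| * ‖D‖ * ‖exp (-(a • A)) * z‖ :=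
  calc ‖fderiv ℝ exp (-(a • A)) (a • D) * z‖
      ≤ ‖fderiv ℝ exp (-(a • A))‖ * ‖a • D‖ * ‖z‖ :=
        (norm_mul_le _ _).trans (by gcongr; exact ContinuousLinearMap.le_opNorm _ _)
    _ ≤ Real.exp ‖a • A‖ * (|a| * ‖D‖) * (Real.exp ‖a • A‖ * ‖exp (-(a • A)) * z‖) := by
        gcongr
        · simpa using norm_fderiv_exp_le (-(a • A))
        · rw [norm_smul, Real.norm_eq_abs]
        · exact norm_le_exp_norm_mul_norm_exp_neg_mul _ _
    _ = Real.exp (2 * ‖a • A‖) * |a| * ‖D‖ * ‖exp (-(a • A)) * z‖ := by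
        rw [two_mul, Real.exp_add]; ring

theorem norm_le_exp_mul_norm_of_hasDerivWithinAt_deriv_smul {f f' : ℝ → ℝ} {G G' x : ℝ → 𝔸}
    {a s t F m : ℝ} (hf : ContinuousOn f (Ici a)) (hf' : ∀ τ ∈ Ioi a, HasDerivAt f (f' τ) τ)
    (hG : ContinuousOn G (Ici a)) (hG' : ∀ τ ∈ Ioi a, HasDerivAt G (G' τ) τ)
    (hG'_cont : ContinuousOn G' (Ioi a)) (hG'_int : IntegrableOn G' (Ioi a))
    (hF : ∀ τ ∈ Ici a, |f τ| ≤ F) (hm : ∀ τ ∈ Ici a, ‖f τ • G τ‖ ≤ m)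
    (hx : ∀ τ ∈ Ici a, HasDerivWithinAt x (f' τ • G τ * x τ) (Ici a) τ)
    (hs : s ∈ Ici a) (ht : t ∈ Ici a) :
    ‖x t‖ ≤ Real.exp (2 * m + Real.exp (2 * m) * F * ∫ τ in Ioi a, ‖G' τ‖) * ‖x s‖ := by
  have hF0 : 0 ≤ F := (abs_nonneg _).trans (hF a self_mem_Ici)
  let y (τ : ℝ) : 𝔸 := exp (-(f τ • G τ)) * x τ
  let r (τ : ℝ) : ℝ := Real.exp (2 * m) * F * ‖G' τ‖
  have y_cont : ContinuousOn y (Ici a) :=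
    (differentiable_exp_real.continuous.comp_continuousOn (hf.smul hG).neg).mul
      fun τ hτ ↦ (hx τ hτ).continuousWithinAt
  have y_deriv (τ : ℝ) (hτ : τ ∈ Ioi a) :
      HasDerivAt y (-(fderiv ℝ exp (-(f τ • G τ)) (f τ • G' τ) * x τ)) τ :=
    hasDerivAt_exp_neg_smul_mul (hf' τ hτ) (hG' τ hτ)
      ((hx τ (Ioi_subset_Ici_self hτ)).hasDerivAt (Ici_mem_nhds hτ))
  have norm_y_deriv_le (τ : ℝ) (hτ : τ ∈ Ioi a) :
      ‖-(fderiv ℝ exp (-(f τ • G τ)) (f τ • G' τ) * x τ)‖ ≤ r τ * ‖y τ‖ := by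
    rw [norm_neg]
    refine (norm_fderiv_exp_neg_smul_mul_le _ _ _ _).trans ?_
    simp only [r]
    gcongr
    · exact hm τ (Ioi_subset_Ici_self hτ)
    · exact hF τ (Ioi_subset_Ici_self hτ)
  have y_bound : ‖y t‖ ≤ Real.exp (∫ τ in Ioi a, r τ) * ‖y s‖ :=
    norm_le_exp_integral_Ioi_mul_of_norm_deriv_le y_cont y_deriv (hG'_int.norm.const_mul _)
      (hG'_cont.norm.const_mul _) (fun τ _ ↦ by positivity) norm_y_deriv_le hs ht
  calc ‖x t‖ ≤ Real.exp ‖f t • G t‖ * ‖y t‖ := norm_le_exp_norm_mul_norm_exp_neg_mul _ _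
    _ ≤ Real.exp m * (Real.exp (∫ τ in Ioi a, r τ) * ‖y s‖) := by gcongr; exact hm t ht
    _ ≤ Real.exp m * (Real.exp (∫ τ in Ioi a, r τ) * (Real.exp m * ‖x s‖)) := by
        gcongr
        refine (norm_exp_mul_le _ _).trans ?_
        rw [norm_neg]
        gcongr
        exact hm s hs
    _ = _ := by rw [integral_const_mul, Real.exp_add, two_mul, Real.exp_add m m]; ring

/-- `X` is an evolution operator of `x' = A(t) x` on `[0, ∞)`, where `X t s` maps the state at
time `s` to the state at time `t`; derivatives at `0` are one-sided. -/
def IsEvolutionOperator {E : Type*} [NormedAddCommGroup E] [NormedSpace ℝ E] (A : ℝ → E →L[ℝ] E)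
    (X : ℝ → ℝ → E →L[ℝ] E) : Prop :=
  ∀ s ∈ Ici (0 : ℝ), X s s = ContinuousLinearMap.id ℝ E ∧
    ∀ t ∈ Ici (0 : ℝ), HasDerivWithinAt (fun τ ↦ X τ s) ((A t).comp (X t s)) (Ici 0) t

/-- The system `x' = A(t) x` on `[0, ∞)` is bistable: its evolution operators are uniformly
bounded, forwards and backwards in time. -/
def IsBistable {E : Type*} [NormedAddCommGroup E] [NormedSpace ℝ E] (A : ℝ → E →L[ℝ] E) : Prop :=
  ∃ C > (0 : ℝ), ∀ X : ℝ → ℝ → E →L[ℝ] E, IsEvolutionOperator A X →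
    ∀ s ∈ Ici (0 : ℝ), ∀ t ∈ Ici (0 : ℝ), ‖X t s‖ ≤ C

theorem stmt12_general {E : Type*} [NormedAddCommGroup E] [NormedSpace ℝ E] [CompleteSpace E]
    {f f' : ℝ → ℝ} {G G' : ℝ → E →L[ℝ] E} {F : ℝ}
    (hf : ContinuousOn f (Ici 0)) (hf' : ∀ t ∈ Ioi 0, HasDerivAt f (f' t) t)
    (hF : ∀ t ∈ Ici 0, |f t| ≤ F)
    (hG : ContinuousOn G (Ici 0)) (hG' : ∀ t ∈ Ioi 0, HasDerivAt G (G' t) t)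
    (hG'_cont : ContinuousOn G' (Ioi 0)) (hG'_int : IntegrableOn G' (Ioi 0)) :
    IsBistable fun t ↦ f' t • G t := by
  let g : ℝ := ‖G 0‖ + ∫ τ in Ioi 0, ‖G' τ‖
  have norm_smul_le (t : ℝ) (ht : t ∈ Ici 0) : ‖f t • G t‖ ≤ F * g := by
    rw [norm_smul, Real.norm_eq_abs]
    exact mul_le_mul (hF t ht) (norm_le_add_integral_Ioi_norm_deriv hG hG' hG'_int ht)
      (norm_nonneg _) ((abs_nonneg _).trans (hF t ht))
  refine ⟨_, Real.exp_pos (2 * (F * g) + Real.exp (2 * (F * g)) * F * ∫ τ in Ioi 0, ‖G' τ‖),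
    fun X hX s hs t ht ↦ ?_⟩
  refine (norm_le_exp_mul_norm_of_hasDerivWithinAt_deriv_smul hf hf' hG hG' hG'_cont hG'_int hF
    norm_smul_le (hX s hs).2 hs ht).trans ?_
  rw [(hX s hs).1]
  exact mul_le_of_le_one_right (Real.exp_pos _).le ContinuousLinearMap.norm_id_le

end Bistability

section ToEuclideanCLM

variable {n : Type*} [Fintype n] [DecidableEq n]

/-- `Matrix.toEuclideanCLM` as a continuous linear map in the matrix entries; the entries are kept
as a function because `Matrix` carries no global norm. -/
noncomputable def entriesToEuclideanCLM (n : Type*) [Fintype n] [DecidableEq n] :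
    (n → n → ℝ) →L[ℝ] EuclideanSpace ℝ n →L[ℝ] EuclideanSpace ℝ n :=
  LinearMap.toContinuousLinearMap
    { toFun M := Matrix.toEuclideanCLM (𝕜 := ℝ) (Matrix.of M)
      map_add' M N := map_add _ (Matrix.of M) (Matrix.of N)
      map_smul' c M := map_smul _ c (Matrix.of M) }

theorem hasDerivAt_toEuclideanCLM {M : ℝ → Matrix n n ℝ} {M' : Matrix n n ℝ} {t : ℝ}
    (h : ∀ i j, HasDerivAt (fun τ ↦ M τ i j) (M' i j) t) :
    HasDerivAt (fun τ ↦ Matrix.toEuclideanCLM (𝕜 := ℝ) (M τ))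
      (Matrix.toEuclideanCLM (𝕜 := ℝ) M') t :=
  (entriesToEuclideanCLM n).hasFDerivAt.comp_hasDerivAt t
    (hasDerivAt_pi.2 fun i ↦ hasDerivAt_pi.2 (h i))

theorem continuousOn_toEuclideanCLM {M : ℝ → Matrix n n ℝ} {s : Set ℝ}
    (h : ∀ i j, ContinuousOn (fun τ ↦ M τ i j) s) :
    ContinuousOn (fun τ ↦ Matrix.toEuclideanCLM (𝕜 := ℝ) (M τ)) s :=
  (entriesToEuclideanCLM n).continuous.comp_continuousOn
    (continuousOn_pi.2 fun i ↦ continuousOn_pi.2 (h i))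

theorem integrableOn_toEuclideanCLM {M : ℝ → Matrix n n ℝ} {s : Set ℝ}
    (h : ∀ i j, IntegrableOn (fun τ ↦ M τ i j) s) :
    IntegrableOn (fun τ ↦ Matrix.toEuclideanCLM (𝕜 := ℝ) (M τ)) s :=
  (entriesToEuclideanCLM n).integrable_comp
    (Integrable.of_eval fun i ↦ Integrable.of_eval (h i))

end ToEuclideanCLM

section Example

/-- The derivative of `exGmat` for `t > 0`; `√t` is not differentiable at `0`. -/
noncomputable def exGmatDeriv (t : ℝ) : Matrix (Fin 2) (Fin 2) ℝ :=
  !![2 / (1 + t ^ 2), 1 / (2 * √(t + 1)) - 1 / (2 * √t);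
     2 * t / (1 + t ^ 2) ^ 2, -Real.exp (-t)]

theorem hasDerivAt_exGmat_apply (i j : Fin 2) {t : ℝ} (ht : 0 < t) :
    HasDerivAt (fun τ ↦ exGmat τ i j) (exGmatDeriv t i j) t := by
  fin_cases i <;> fin_cases j
  · exact ((Real.hasDerivAt_arctan t).const_mul 2).congr_deriv (mul_one_div _ _)
  · have ht1 : t + 1 ≠ 0 := by positivity
    exact (((hasDerivAt_id t).add_const 1).sqrt ht1).sub (Real.hasDerivAt_sqrt ht.ne')
  · have one_add_sq_ne : 1 + t ^ 2 ≠ 0 := by positivity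
    refine (((((hasDerivAt_id t).pow 2).const_add 1).inv one_add_sq_ne).neg.congr_deriv
      (g' := 2 * t / (1 + t ^ 2) ^ 2) ?_).congr_of_eventuallyEq (.of_forall fun τ ↦ ?_)
    · simp [neg_div]
    · simp [exGmat]
  · exact ((hasDerivAt_neg t).exp.const_add 1).congr_deriv (mul_neg_one _)

theorem continuous_exGmat_apply (i j : Fin 2) : Continuous fun t ↦ exGmat t i j := by
  have one_add_sq_ne (t : ℝ) : 1 + t ^ 2 ≠ 0 := by positivity
  fin_cases i <;> fin_cases j
  · exact Real.continuous_arctan.const_mul 2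
  · exact (by fun_prop : Continuous fun t ↦ √(t + 1) - √t)
  · exact (by fun_prop (disch := assumption) : Continuous fun t : ℝ ↦ -(1 / (1 + t ^ 2)))
  · exact (by fun_prop : Continuous fun t ↦ 1 + Real.exp (-t))

theorem continuousOn_exGmatDeriv_apply (i j : Fin 2) :
    ContinuousOn (fun t ↦ exGmatDeriv t i j) (Ioi 0) := by
  have one_add_sq_ne (t : ℝ) : 1 + t ^ 2 ≠ 0 := by positivity
  have sqrt_ne (t : ℝ) (ht : t ∈ Ioi 0) : 2 * √t ≠ 0 := by
    have := Real.sqrt_pos.2 ht; positivity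
  have sqrt_add_one_ne (t : ℝ) (ht : t ∈ Ioi 0) : 2 * √(t + 1) ≠ 0 :=
    sqrt_ne (t + 1) (mem_Ioi.2 (add_pos ht one_pos))
  fin_cases i <;> fin_cases j
  · exact (by fun_prop (disch := assumption) : Continuous fun t : ℝ ↦ 2 / (1 + t ^ 2)).continuousOn
  · exact (by fun_prop (disch := assumption) :
      ContinuousOn (fun t ↦ 1 / (2 * √(t + 1)) - 1 / (2 * √t)) (Ioi 0))
  · exact (by fun_prop (disch := simp [one_add_sq_ne]) :
      Continuous fun t : ℝ ↦ 2 * t / (1 + t ^ 2) ^ 2).continuousOn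
  · exact (by fun_prop : Continuous fun t ↦ -Real.exp (-t)).continuousOn

theorem tendsto_sqrt_add_one_sub_sqrt : Tendsto (fun t ↦ √(t + 1) - √t) atTop (𝓝 0) := by
  refine squeeze_zero' (.of_forall fun t ↦ ?_) ?_
    (tendsto_inv_atTop_zero.comp Real.tendsto_sqrt_atTop)
  · exact sub_nonneg.2 (Real.sqrt_le_sqrt (by linarith))
  · filter_upwards [eventually_gt_atTop 0] with t ht
    have sqrt_pos : 0 < √t := Real.sqrt_pos.2 ht
    rw [Function.comp_apply, ← one_div, le_div_iff₀ sqrt_pos]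
    nlinarith [Real.sq_sqrt ht.le, Real.sq_sqrt (by positivity : 0 ≤ t + 1),
      Real.sqrt_nonneg (t + 1)]

theorem tendsto_exGmat_apply (i j : Fin 2) :
    Tendsto (fun t ↦ exGmat t i j) atTop (𝓝 (!![Real.pi, 0; 0, 1] i j)) := by
  fin_cases i <;> fin_cases j
  · have h := (tendsto_nhds_of_tendsto_nhdsWithin Real.tendsto_arctan_atTop).const_mul 2
    rwa [mul_div_cancel₀ _ two_ne_zero] at h
  · exact tendsto_sqrt_add_one_sub_sqrt
  · have denominator : Tendsto (fun t : ℝ ↦ 1 + t ^ 2) atTop atTop :=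
      tendsto_atTop_add_const_left _ _ (tendsto_pow_atTop two_ne_zero)
    simpa [exGmat] using denominator.inv_tendsto_atTop.neg
  · simpa [exGmat] using Real.tendsto_exp_neg_atTop_nhds_zero.const_add 1

theorem integrableOn_exGmatDeriv_apply (i j : Fin 2) :
    IntegrableOn (fun t ↦ exGmatDeriv t i j) (Ioi 0) := by
  have of_nonneg (h : ∀ t ∈ Ioi 0, 0 ≤ exGmatDeriv t i j) :=
    integrableOn_Ioi_deriv_of_nonneg (continuous_exGmat_apply i j).continuousWithinAt
      (fun _ ↦ hasDerivAt_exGmat_apply i j) h (tendsto_exGmat_apply i j)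
  have of_nonpos (h : ∀ t ∈ Ioi 0, exGmatDeriv t i j ≤ 0) :=
    integrableOn_Ioi_deriv_of_nonpos (continuous_exGmat_apply i j).continuousWithinAt
      (fun _ ↦ hasDerivAt_exGmat_apply i j) h (tendsto_exGmat_apply i j)
  fin_cases i <;> fin_cases j
  · exact of_nonneg fun t _ ↦ (by positivity : 0 ≤ 2 / (1 + t ^ 2))
  · refine of_nonpos fun t (ht : 0 < t) ↦ sub_nonpos.2 ?_
    have : 0 < √t := Real.sqrt_pos.2 ht
    gcongr
    exact le_add_of_nonneg_right zero_le_one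
  · exact of_nonneg fun t (ht : 0 < t) ↦ (by positivity : 0 ≤ 2 * t / (1 + t ^ 2) ^ 2)
  · exact of_nonpos fun t _ ↦ neg_nonpos.2 (Real.exp_pos _).le

end Example

/-- The system `A(t) = cos(t)·G̃(t)` on `[0, ∞)` is bistable in `ℝ²`:
all evolution operators are uniformly bounded. -/
theorem stmt12 :
    ∃ C > (0 : ℝ),
      ∀ X : ℝ → ℝ → EuclideanSpace ℝ (Fin 2) →L[ℝ] EuclideanSpace ℝ (Fin 2),
        (∀ s ∈ Set.Ici (0 : ℝ),
          X s s = ContinuousLinearMap.id ℝ (EuclideanSpace ℝ (Fin 2)) ∧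
          ∀ t ∈ Set.Ici (0 : ℝ),
            HasDerivWithinAt (fun τ => X τ s)
              ((Real.cos t •
                (Matrix.toEuclideanCLM (𝕜 := ℝ) (exGmat t) :
                  EuclideanSpace ℝ (Fin 2) →L[ℝ] EuclideanSpace ℝ (Fin 2))).comp (X t s))
              (Set.Ici 0) t) →
        ∀ s ∈ Set.Ici (0 : ℝ), ∀ t ∈ Set.Ici (0 : ℝ), ‖X t s‖ ≤ C :=
  stmt12_general Real.continuous_sin.continuousOn (fun t _ ↦ Real.hasDerivAt_sin t)
    (fun t _ ↦ Real.abs_sin_le_one t)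
    (continuousOn_toEuclideanCLM fun i j ↦ (continuous_exGmat_apply i j).continuousOn)
    (fun _ ht ↦ hasDerivAt_toEuclideanCLM fun i j ↦ hasDerivAt_exGmat_apply i j ht)
    (continuousOn_toEuclideanCLM continuousOn_exGmatDeriv_apply)
    (integrableOn_toEuclideanCLM integrableOn_exGmatDeriv_apply)
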